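/- For each P/T Petri net N = (S, A, T), structure-preserving bisimilarity ~sp is an equivalence relation on the set of markings of N (it is reflexive, symmetric, and transitive). -/

import Mathlib

/-- A transition of a P/T net: a triple (pre-set, label, post-set). -/
structure PNTrans (S A : Type) where
  pre : Multiset S
  label : A
  post : Multiset S
deriving DecidableEq

/-- A P/T Petri net over places `S` and labels `A`: a finite set of transitions,
each with a nonempty pre-set. -/
structure PetriNet (S A : Type) [DecidableEq S] [DecidableEq A] where
  T : Finset (PNTrans S A)
  pre_ne : ∀ t ∈ T, t.pre ≠ 0

/-- The additive closure `R⊕` of a place relation `R`: the least relation on markings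
containing `(θ, θ)` and closed under adding `R`-related places on both sides. -/
inductive AddClosure {S : Type} (R : S → S → Prop) : Multiset S → Multiset S → Prop
  | zero : AddClosure R 0 0
  | cons {s1 s2 : S} {m1 m2 : Multiset S} :
      R s1 s2 → AddClosure R m1 m2 → AddClosure R (s1 ::ₘ m1) (s2 ::ₘ m2)

/-- `Fires N m t m'` : transition `t` of `N` is enabled at marking `m` and its firing
produces `m' = (m ⊖ pre(t)) ⊕ post(t)`. -/
def Fires {S A : Type} [DecidableEq S] [DecidableEq A]
    (N : PetriNet S A) (m : Multiset S) (t : PNTrans S A) (m' : Multiset S) : Prop :=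
  t ∈ N.T ∧ t.pre ≤ m ∧ m' = m - t.pre + t.post

/-- A place bisimulation on `N`. -/
def IsPlaceBisim {S A : Type} [DecidableEq S] [DecidableEq A]
    (N : PetriNet S A) (R : S → S → Prop) : Prop :=
  ∀ m1 m2, AddClosure R m1 m2 →
    (∀ t1 m1', Fires N m1 t1 m1' →
      ∃ t2 m2', Fires N m2 t2 m2' ∧ AddClosure R t1.pre t2.pre ∧
        t1.label = t2.label ∧ AddClosure R t1.post t2.post ∧ AddClosure R m1' m2') ∧
    (∀ t2 m2', Fires N m2 t2 m2' →
      ∃ t1 m1', Fires N m1 t1 m1' ∧ AddClosure R t1.pre t2.pre ∧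
        t1.label = t2.label ∧ AddClosure R t1.post t2.post ∧ AddClosure R m1' m2')

/-- Place bisimilarity `m1 ~p m2`. -/
def PlaceBisimilar {S A : Type} [DecidableEq S] [DecidableEq A]
    (N : PetriNet S A) (m1 m2 : Multiset S) : Prop :=
  ∃ R : S → S → Prop, IsPlaceBisim N R ∧ AddClosure R m1 m2

/-- An interleaving bisimulation on the markings of `N`. -/
def IsIntBisim {S A : Type} [DecidableEq S] [DecidableEq A]
    (N : PetriNet S A) (Q : Multiset S → Multiset S → Prop) : Prop :=
  ∀ m1 m2, Q m1 m2 →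
    (∀ t1 m1', Fires N m1 t1 m1' →
      ∃ t2 m2', Fires N m2 t2 m2' ∧ t1.label = t2.label ∧ Q m1' m2') ∧
    (∀ t2 m2', Fires N m2 t2 m2' →
      ∃ t1 m1', Fires N m1 t1 m1' ∧ t1.label = t2.label ∧ Q m1' m2')

/-- Interleaving bisimilarity `m1 ~int m2`. -/
def IntBisimilar {S A : Type} [DecidableEq S] [DecidableEq A]
    (N : PetriNet S A) (m1 m2 : Multiset S) : Prop :=
  ∃ Q, IsIntBisim N Q ∧ Q m1 m2

/-- First projection of a linking. -/
def lproj1 {S : Type} (l : Multiset (S × S)) : Multiset S := l.map Prod.fst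

/-- Second projection of a linking. -/
def lproj2 {S : Type} (l : Multiset (S × S)) : Multiset S := l.map Prod.snd

/-- A structure-preserving bisimulation on `N`: a set of linkings. -/
def IsSpBisim {S A : Type} [DecidableEq S] [DecidableEq A]
    (N : PetriNet S A) (R : Set (Multiset (S × S))) : Prop :=
  ∀ l ∈ R, ∀ c ≤ l,
    (∀ t1 ∈ N.T, t1.pre = lproj1 c →
      ∃ t2 ∈ N.T, t1.label = t2.label ∧ t2.pre = lproj2 c ∧
        ∃ cb : Multiset (S × S), t1.post = lproj1 cb ∧ t2.post = lproj2 cb ∧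
          l - c + cb ∈ R) ∧
    (∀ t2 ∈ N.T, t2.pre = lproj2 c →
      ∃ t1 ∈ N.T, t1.label = t2.label ∧ t1.pre = lproj1 c ∧
        ∃ cb : Multiset (S × S), t1.post = lproj1 cb ∧ t2.post = lproj2 cb ∧
          l - c + cb ∈ R)

/-- Structure-preserving bisimilarity `m1 ~sp m2`. -/
def SpBisimilar {S A : Type} [DecidableEq S] [DecidableEq A]
    (N : PetriNet S A) (m1 m2 : Multiset S) : Prop :=
  ∃ (R : Set (Multiset (S × S))) (l : Multiset (S × S)),
    IsSpBisim N R ∧ l ∈ R ∧ lproj1 l = m1 ∧ lproj2 l = m2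

/-- A submultiset of an image lifts to a submultiset. -/
theorem sp_lift {α β : Type} (f : α → β) (w : Multiset α) (c : Multiset β)
    (h : c ≤ w.map f) : ∃ w' u, w = w' + u ∧ w'.map f = c := by
  induction w using Quotient.inductionOn with
  | h L =>
    induction c using Quotient.inductionOn with
    | h C =>
      obtain ⟨K, hK, hs⟩ : List.Subperm C (L.map f) := h
      obtain ⟨L', hL', rfl⟩ := List.sublist_map_iff.1 hs
      have hle : (L' : Multiset α) ≤ (L : Multiset α) := hL'.subperm
      obtain ⟨u, hu⟩ := Multiset.le_iff_exists_add.1 hle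
      exact ⟨L', u, hu, Quotient.sound hK⟩

/-- Two linkings which agree in the middle come from a multiset of triples. -/
theorem sp_glue {S : Type} (a : Multiset (S × S)) : ∀ b : Multiset (S × S),
    a.map Prod.snd = b.map Prod.fst → ∃ w : Multiset (S × S × S),
      w.map (fun x => (x.1, x.2.1)) = a ∧ w.map (fun x => x.2) = b := by
  induction a using Multiset.induction_on with
  | empty =>
    intro b h
    have hb : b = 0 := by simpa using h.symm
    exact ⟨0, by simp [hb]⟩
  | cons p a ih =>
    intro b h
    have hm : p.2 ∈ b.map Prod.fst := by rw [← h]; simp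
    obtain ⟨q, hq, hqp⟩ := Multiset.mem_map.1 hm
    obtain ⟨b', rfl⟩ := Multiset.exists_cons_of_mem hq
    rw [Multiset.map_cons, Multiset.map_cons, hqp, Multiset.cons_inj_right] at h
    obtain ⟨w, h1, h2⟩ := ih b' h
    refine ⟨(p.1, q) ::ₘ w, ?_, ?_⟩
    · rw [Multiset.map_cons, h1]; simp [hqp]
    · rw [Multiset.map_cons, h2]

theorem sp_map_sub {α β : Type} [DecidableEq β] (f : α → β) (w u : Multiset α) :
    (w + u).map f - w.map f = u.map f := by
  rw [Multiset.map_add, add_tsub_cancel_left]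

theorem sp_refl {S A : Type} [DecidableEq S] [DecidableEq A] (N : PetriNet S A)
    (m : Multiset S) : SpBisimilar N m m := by
  have key : ∀ m : Multiset S, lproj1 (m.map fun s => (s, s)) = m ∧
      lproj2 (m.map fun s => (s, s)) = m := by
    intro m; simp [lproj1, lproj2]
  refine ⟨{l | ∃ m : Multiset S, l = m.map fun s => (s, s)}, m.map fun s => (s, s),
    ?_, ⟨m, rfl⟩, (key m).1, (key m).2⟩
  rintro l ⟨m, rfl⟩ c hc
  obtain ⟨w, u, rfl, rfl⟩ := sp_lift _ _ _ hc
  rw [sp_map_sub, (key w).1, (key w).2]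
  refine ⟨?_, ?_⟩ <;> intro t ht hp <;>
  exact ⟨t, ht, rfl, hp, t.post.map fun s => (s, s), (key _).1.symm, (key _).2.symm,
      u + t.post, by simp⟩

theorem sp_symm {S A : Type} [DecidableEq S] [DecidableEq A] (N : PetriNet S A)
    {m1 m2 : Multiset S} (h : SpBisimilar N m1 m2) : SpBisimilar N m2 m1 := by
  obtain ⟨R, l, hR, hl, h1, h2⟩ := h
  have k1 : ∀ l : Multiset (S × S), lproj1 (l.map Prod.swap) = lproj2 l := by
    intro l; simp [lproj1, lproj2]
  have k2 : ∀ l : Multiset (S × S), lproj2 (l.map Prod.swap) = lproj1 l := by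
    intro l; simp [lproj1, lproj2]
  refine ⟨{l' | ∃ l ∈ R, l' = l.map Prod.swap}, l.map Prod.swap, ?_, ⟨l, hl, rfl⟩,
    by rw [k1, h2], by rw [k2, h1]⟩
  rintro _ ⟨l, hl, rfl⟩ c hc
  obtain ⟨w, u, rfl, rfl⟩ := sp_lift _ _ _ hc
  obtain ⟨ha, hb⟩ := hR _ hl w (Multiset.le_add_right _ _)
  rw [add_tsub_cancel_left] at ha hb
  rw [sp_map_sub, k1, k2]
  constructor
  · intro t ht hp
    obtain ⟨t', ht', e, hp', cb, q1, q2, hr⟩ := hb t ht hp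
    exact ⟨t', ht', e.symm, hp', cb.map Prod.swap, by rw [k1, q2], by rw [k2, q1],
      u + cb, hr, by simp⟩
  · intro t ht hp
    obtain ⟨t', ht', e, hp', cb, q1, q2, hr⟩ := ha t ht hp
    exact ⟨t', ht', e.symm, hp', cb.map Prod.swap, by rw [k1, q2], by rw [k2, q1],
      u + cb, hr, by simp⟩

theorem sp_trans {S A : Type} [DecidableEq S] [DecidableEq A] (N : PetriNet S A)
    {m1 m2 m3 : Multiset S} (h : SpBisimilar N m1 m2) (h' : SpBisimilar N m2 m3) :
    SpBisimilar N m1 m3 := by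
  obtain ⟨R1, l1, hR1, hl1, h1, h2⟩ := h
  obtain ⟨R2, l2, hR2, hl2, h3, h4⟩ := h'
  let f : S × S × S → S × S := fun x => (x.1, x.2.1)
  let g : S × S × S → S × S := fun x => x.2
  let k : S × S × S → S × S := fun x => (x.1, x.2.2)
  have k1 : ∀ w : Multiset (S × S × S), lproj1 (w.map k) = lproj1 (w.map f) := by
    intro w; simp [lproj1, f, k]
  have k2 : ∀ w : Multiset (S × S × S), lproj2 (w.map k) = lproj2 (w.map g) := by
    intro w; simp [lproj2, g, k]
  have k3 : ∀ w : Multiset (S × S × S), lproj2 (w.map f) = lproj1 (w.map g) := by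
    intro w; simp [lproj1, lproj2, f, g]
  have glue : ∀ a b : Multiset (S × S), lproj2 a = lproj1 b →
      ∃ w : Multiset (S × S × S), w.map f = a ∧ w.map g = b := sp_glue
  obtain ⟨w, hw1, hw2⟩ := glue l1 l2 (h2.trans h3.symm)
  refine ⟨{l | ∃ w : Multiset (S × S × S), w.map f ∈ R1 ∧ w.map g ∈ R2 ∧ l = w.map k},
    w.map k, ?_, ⟨w, by rwa [hw1], by rwa [hw2], rfl⟩,
    by rw [k1, hw1, h1], by rw [k2, hw2, h4]⟩
  rintro _ ⟨w, hf, hg, rfl⟩ c hc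
  obtain ⟨w, u, rfl, rfl⟩ := sp_lift _ _ _ hc
  obtain ⟨ha1, hb1⟩ := hR1 _ hf (w.map f) (Multiset.map_le_map (Multiset.le_add_right _ _))
  obtain ⟨ha2, hb2⟩ := hR2 _ hg (w.map g) (Multiset.map_le_map (Multiset.le_add_right _ _))
  rw [sp_map_sub] at ha1 hb1 ha2 hb2
  rw [sp_map_sub, k1, k2]
  constructor
  · intro t ht hp
    obtain ⟨t', ht', e, hp', cb, q1, q2, hr⟩ := ha1 t ht hp
    obtain ⟨s, hs, e', hp'', cb', q1', q2', hr'⟩ := ha2 t' ht' (hp'.trans (k3 w))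
    obtain ⟨v, rfl, rfl⟩ := glue cb cb' (q2.symm.trans q1')
    exact ⟨s, hs, e.trans e', hp'', v.map k, by rw [k1, q1], by rw [k2, q2'],
      u + v, by rwa [Multiset.map_add], by rwa [Multiset.map_add], by rw [Multiset.map_add]⟩
  · intro t ht hp
    obtain ⟨t', ht', e, hp', cb', q1', q2', hr'⟩ := hb2 t ht hp
    obtain ⟨s, hs, e', hp'', cb, q1, q2, hr⟩ := hb1 t' ht' (hp'.trans (k3 w).symm)
    obtain ⟨v, rfl, rfl⟩ := glue cb cb' (q2.symm.trans q1')
    exact ⟨s, hs, e'.trans e, hp'', v.map k, by rw [k1, q1], by rw [k2, q2'],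
      u + v, by rwa [Multiset.map_add], by rwa [Multiset.map_add], by rw [Multiset.map_add]⟩

/-- structure-preserving bisimilarity is an equivalence relation on
markings. -/
theorem spBisimilar_equivalence {S A : Type} [Fintype S] [Fintype A]
    [DecidableEq S] [DecidableEq A] (N : PetriNet S A) :
    Equivalence (SpBisimilar N) := by
  exact ⟨sp_refl N, fun h => sp_symm N h, fun h h' => sp_trans N h h'⟩
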